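/- arXiv:1309.7192 — 2 statements merged into one kernel-verified Lean document; each statement's English description precedes it below -/
import Mathlib

section
/- Let K be an algebraically closed field of characteristic 0 and let a, b ≥ 1 be integers. If f, g ∈ K[x₀,x₁,y₀,y₁] are bihomogeneous of bidegree (a,b), not proportional to each other, and both define smooth curves, then there exist u, v ∈ K \ {0} and an admissible point P = (p₀,p₁,q₀,q₁) such that all four partial derivatives ∂/∂x₀, ∂/∂x₁, ∂/∂y₀, ∂/∂y₁ of u·f + v·g vanish at P. -/
noncomputable section
open MvPolynomial

variable {K : Type*} [Field K]

/-- `f` is bihomogeneous of bidegree `(a,b)` in the variables `x₀ = X 0`, `x₁ = X 1`,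
`y₀ = X 2`, `y₁ = X 3`. -/
def IsBihomogeneous (a b : ℕ) (f : MvPolynomial (Fin 4) K) : Prop :=
  ∀ m ∈ f.support, m 0 + m 1 = a ∧ m 2 + m 3 = b

/-- An admissible point of `K⁴`: `(p₀,p₁) ≠ (0,0)` and `(q₀,q₁) ≠ (0,0)`,
representing a point of `ℙ¹ × ℙ¹`. -/
def Admissible (P : Fin 4 → K) : Prop :=
  (P 0, P 1) ≠ (0, 0) ∧ (P 2, P 3) ≠ (0, 0)

/-- The curve defined by `f` on `ℙ¹ × ℙ¹` is smooth: the four partial derivatives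
of `f` have no common admissible zero. -/
def DefinesSmoothCurve (f : MvPolynomial (Fin 4) K) : Prop :=
  ∀ P : Fin 4 → K, Admissible P → ∃ i : Fin 4, eval P (pderiv i f) ≠ 0

/-- The first Jacobian space `J₁(f) = span_K {∂f/∂x₀, ∂f/∂x₁}`. -/
def J1 (f : MvPolynomial (Fin 4) K) : Submodule K (MvPolynomial (Fin 4) K) :=
  Submodule.span K {pderiv 0 f, pderiv 1 f}

/-- The second Jacobian space `J₂(f) = span_K {∂f/∂y₀, ∂f/∂y₁}`. -/
def J2 (f : MvPolynomial (Fin 4) K) : Submodule K (MvPolynomial (Fin 4) K) :=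
  Submodule.span K {pderiv 2 f, pderiv 3 f}

/-!
Where the gradients of `f` and `g` are proportional at an admissible point, smoothness makes both
gradients nonzero, so a combination with two nonzero coefficients is singular there. Suppose there
is no such point. Let `I` be generated by the Jacobian minors `D = ∂(f,g)/∂(x₀,x₁)` and
`E = ∂(f,g)/∂(y₀,y₁)`. Euler's identities put `f` and `g` times any Jacobian minor into `I`, and by
the Nullstellensatz the ideal of all minors contains a power of the irrelevant ideal, so
`(f, g) ⊆ I` in large bidegrees. But there `(f, g)` has codimension at most `2ab`, the intersection
number of two curves of bidegree `(a,b)` without common component, while `I` has codimension at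
least `D · E = (2a - 2)(2b - 2) + 4ab`. The difference `6ab - 4a - 4b + 4`, the degree of the
discriminant, is positive: a contradiction.
-/

theorem exists_smul_add_smul_eq_zero_of_minors_eq_zero {ι : Type*} {x y : ι → K}
    (hx : x ≠ 0) (hy : y ≠ 0) (h : ∀ i j, x i * y j - x j * y i = 0) :
    ∃ u v : K, u ≠ 0 ∧ v ≠ 0 ∧ u • x + v • y = 0 := by
  obtain ⟨i, hi⟩ := Function.ne_iff.1 hx
  obtain ⟨j, hj⟩ := Function.ne_iff.1 hy
  refine ⟨-y i, x i, fun hyi ↦ mul_ne_zero hi hj ?_, hi, funext fun k ↦ ?_⟩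
  · linear_combination h i j - x j * hyi
  · simp only [Pi.add_apply, Pi.smul_apply, smul_eq_mul, Pi.zero_apply]
    linear_combination h i k

section Koszul

open scoped Pointwise

variable {A : Type*} [CommRing A] [Algebra K A]

instance finiteDimensional_pointwise_smul (F : A) (V : Submodule K A)
    [FiniteDimensional K V] : FiniteDimensional K ↥(F • V) :=
  inferInstanceAs (FiniteDimensional K ↥(V.map (DistribSMul.toLinearMap K A F)))

variable [IsDomain A]

theorem finrank_pointwise_smul {F : A} (hF : F ≠ 0) (V : Submodule K A) :
    Module.finrank K ↥(F • V) = Module.finrank K V :=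
  (Submodule.equivMapOfInjective (DistribSMul.toLinearMap K A F)
    (mul_right_injective₀ hF) V).finrank_eq.symm

theorem finrank_smul_sup_smul_add_finrank_le {F G : A} (hFG : F ≠ 0 ∨ G ≠ 0)
    {U V W : Submodule K A} [FiniteDimensional K V] [FiniteDimensional K W]
    (hV : G • U ≤ V) (hW : F • U ≤ W) :
    Module.finrank K ↥(F • V ⊔ G • W) + Module.finrank K U
      ≤ Module.finrank K V + Module.finrank K W := by
  wlog hF : F ≠ 0 generalizing F G V W
  · rw [sup_comm, add_comm (Module.finrank K V)]
    exact this hFG.symm hW hV (hFG.resolve_left hF)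
  rcases eq_or_ne G 0 with rfl | hG
  · have hU := Submodule.finrank_mono hW
    rw [finrank_pointwise_smul hF] at hU
    have hzero : (0 : A) • W = ⊥ := by
      rw [eq_bot_iff]
      rintro _ ⟨w, -, rfl⟩
      simp
    rw [hzero, sup_bot_eq, finrank_pointwise_smul hF]
    gcongr
  have koszul_le : (F * G) • U ≤ F • V ⊓ G • W :=
    le_inf (by grw [mul_smul, hV]) (by grw [mul_comm, mul_smul, hW])
  calc _ = Module.finrank K ↥(F • V ⊔ G • W) + Module.finrank K ↥((F * G) • U) := by
        rw [finrank_pointwise_smul (mul_ne_zero hF hG)]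
    _ ≤ Module.finrank K ↥(F • V ⊔ G • W) + Module.finrank K ↥(F • V ⊓ G • W) := by
        gcongr
        exact Submodule.finrank_mono koszul_le
    _ = Module.finrank K V + Module.finrank K W := by
        rw [Submodule.finrank_sup_add_finrank_inf_eq, finrank_pointwise_smul hF,
          finrank_pointwise_smul hG]

end Koszul

section GradedKoszul

open scoped Pointwise

variable {ι A : Type*} [DecidableEq ι] [AddCancelCommMonoid ι] [CommRing A] [Algebra K A]
  (𝒜 : ι → Submodule K A) [GradedAlgebra 𝒜] {F G : A} {c d : ι}

theorem exists_mem_mul_eq_of_dvd (hF : F ∈ 𝒜 c) {r : ι} {p : A} (hp : p ∈ 𝒜 (c + r))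
    (h : F ∣ p) : ∃ u ∈ 𝒜 r, F * u = p := by
  obtain ⟨u, rfl⟩ := h
  refine ⟨DirectSum.decompose 𝒜 u r, SetLike.coe_mem _, ?_⟩
  rw [← DirectSum.coe_decompose_mul_add_of_left_mem 𝒜 hF, DirectSum.decompose_of_mem_same 𝒜 hp]

theorem mem_smul_sup_smul_of_mem_span_pair (hF : F ∈ 𝒜 c) (hG : G ∈ 𝒜 d) {n s t : ι}
    (hs : c + s = n) (ht : d + t = n) {p : A} (hp : p ∈ 𝒜 n) (hpI : p ∈ Ideal.span {F, G}) :
    p ∈ F • 𝒜 s ⊔ G • 𝒜 t := by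
  obtain ⟨α, β, rfl⟩ := Ideal.mem_span_pair.1 hpI
  have hdecomp : α * F + β * G
      = F • (DirectSum.decompose 𝒜 α s : A) + G • (DirectSum.decompose 𝒜 β t : A) := by
    rw [smul_eq_mul, smul_eq_mul, ← DirectSum.coe_decompose_mul_add_of_left_mem 𝒜 hF,
      ← DirectSum.coe_decompose_mul_add_of_left_mem 𝒜 hG, hs, ht, mul_comm F, mul_comm G]
    nth_rw 1 [← DirectSum.decompose_of_mem_same 𝒜 hp]
    simp
  rw [hdecomp]
  exact Submodule.add_mem_sup (Submodule.smul_mem_pointwise_smul _ _ _ (SetLike.coe_mem _))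
    (Submodule.smul_mem_pointwise_smul _ _ _ (SetLike.coe_mem _))

variable [DecompositionMonoid A]

theorem smul_inf_smul_le_of_isRelPrime (hFG : IsRelPrime F G) (hG : G ∈ 𝒜 d) (r : ι)
    (W : Submodule K A) : F • 𝒜 (d + r) ⊓ G • W ≤ (F * G) • 𝒜 r := by
  rintro _ ⟨⟨p, hp, rfl⟩, ⟨q, -, hpq : G * q = F * p⟩⟩
  have hGp : G ∣ p := hFG.symm.dvd_of_dvd_mul_left ⟨q, hpq.symm⟩
  obtain ⟨u, hu, rfl⟩ := exists_mem_mul_eq_of_dvd 𝒜 hG hp hGp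
  exact ⟨u, hu, mul_assoc F G u⟩

theorem finrank_add_finrank_le_of_isRelPrime [IsDomain A] {r : ι} [FiniteDimensional K (𝒜 r)]
    [FiniteDimensional K (𝒜 (d + r))] {W : Submodule K A} [FiniteDimensional K W]
    (hFG : IsRelPrime F G) (hF : F ≠ 0) (hG : G ≠ 0) (hGd : G ∈ 𝒜 d) :
    Module.finrank K (𝒜 (d + r)) + Module.finrank K W
      ≤ Module.finrank K ↥(F • 𝒜 (d + r) ⊔ G • W) + Module.finrank K (𝒜 r) := by
  rw [← finrank_pointwise_smul hF (𝒜 (d + r)), ← finrank_pointwise_smul hG W,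
    ← Submodule.finrank_sup_add_finrank_inf_eq, ← finrank_pointwise_smul (mul_ne_zero hF hG) (𝒜 r)]
  gcongr
  exact Submodule.finrank_mono (smul_inf_smul_le_of_isRelPrime 𝒜 hFG hGd r W)

end GradedKoszul

section Bigrading

/-- The bidegrees of the four variables, so that weighted homogeneity with these weights is
bihomogeneity. -/
def bidegreeWeight : Fin 4 → ℕ × ℕ := ![(1, 0), (1, 0), (0, 1), (0, 1)]

theorem weight_bidegreeWeight (d : Fin 4 →₀ ℕ) :
    Finsupp.weight bidegreeWeight d = (d 0 + d 1, d 2 + d 3) := by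
  rw [Finsupp.weight_apply, Finsupp.sum_fintype _ _ (by simp)]
  simp [Fin.sum_univ_four, bidegreeWeight, -nsmul_eq_mul]

variable (K) in
/-- The bigraded piece of bidegree `m`, as a subspace of the polynomial ring. -/
abbrev bihomogeneousSubmodule (m : ℕ × ℕ) : Submodule K (MvPolynomial (Fin 4) K) :=
  weightedHomogeneousSubmodule K bidegreeWeight m

instance gradedAlgebra_bihomogeneousSubmodule : GradedAlgebra (bihomogeneousSubmodule K) :=
  weightedGradedAlgebra K bidegreeWeight

theorem mem_bihomogeneousSubmodule_iff {a b : ℕ} {f : MvPolynomial (Fin 4) K} :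
    f ∈ bihomogeneousSubmodule K (a, b) ↔ IsBihomogeneous a b f := by
  simp only [mem_weightedHomogeneousSubmodule, IsWeightedHomogeneous, weight_bidegreeWeight,
    Prod.mk.injEq, IsBihomogeneous, mem_support_iff]

/-- A monomial of bidegree `m` is determined by its exponents of `x₀` and `y₀`. -/
def bidegreeExponentEquiv (m : ℕ × ℕ) :
    {d : Fin 4 →₀ ℕ | Finsupp.weight bidegreeWeight d = m} ≃ Fin (m.1 + 1) × Fin (m.2 + 1) where
  toFun d :=
    have hd : (d.1 0 + d.1 1, d.1 2 + d.1 3) = m := weight_bidegreeWeight d.1 ▸ d.2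
    (⟨d.1 0, by grind⟩, ⟨d.1 2, by grind⟩)
  invFun p := ⟨Finsupp.equivFunOnFinite.symm ![p.1, m.1 - p.1, p.2, m.2 - p.2], by
    have := p.1.2
    have := p.2.2
    rw [Set.mem_ofPred_eq, weight_bidegreeWeight]
    ext <;> simp <;> omega⟩
  left_inv d := by
    have hd : (d.1 0 + d.1 1, d.1 2 + d.1 3) = m := weight_bidegreeWeight d.1 ▸ d.2
    ext i
    fin_cases i <;> simp [← hd]
  right_inv p := by ext <;> simp

/-- The monomial basis of a bigraded piece. -/
def bihomogeneousBasis (m : ℕ × ℕ) :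
    Module.Basis (Fin (m.1 + 1) × Fin (m.2 + 1)) K (bihomogeneousSubmodule K m) :=
  ((basisRestrictSupport K _).map (LinearEquiv.ofEq _ _
    (weightedHomogeneousSubmodule_eq_finsupp_supported K bidegreeWeight m).symm)).reindex
      (bidegreeExponentEquiv m)

instance finiteDimensional_bihomogeneousSubmodule (m : ℕ × ℕ) :
    FiniteDimensional K (bihomogeneousSubmodule K m) :=
  .of_basis (bihomogeneousBasis m)

theorem finrank_bihomogeneousSubmodule (m : ℕ × ℕ) :
    Module.finrank K (bihomogeneousSubmodule K m) = (m.1 + 1) * (m.2 + 1) := by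
  simp [Module.finrank_eq_card_basis (bihomogeneousBasis m)]

variable {a b : ℕ} {f : MvPolynomial (Fin 4) K}

theorem IsBihomogeneous.euler_fst (h : IsBihomogeneous a b f) :
    X 0 * pderiv 0 f + X 1 * pderiv 1 f = C (a : K) * f := by
  have hw : IsWeightedHomogeneous (![1, 1, 0, 0] : Fin 4 → ℕ) f a := fun d hd ↦ by
    rw [Finsupp.weight_apply, Finsupp.sum_fintype _ _ (by simp)]
    simpa [Fin.sum_univ_four] using (h d (mem_support_iff.2 hd)).1
  simpa [Fin.sum_univ_four] using hw.sum_weight_X_mul_pderiv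

theorem IsBihomogeneous.euler_snd (h : IsBihomogeneous a b f) :
    X 2 * pderiv 2 f + X 3 * pderiv 3 f = C (b : K) * f := by
  have hw : IsWeightedHomogeneous (![0, 0, 1, 1] : Fin 4 → ℕ) f b := fun d hd ↦ by
    rw [Finsupp.weight_apply, Finsupp.sum_fintype _ _ (by simp)]
    simpa [Fin.sum_univ_four] using (h d (mem_support_iff.2 hd)).2
  simpa [Fin.sum_univ_four] using hw.sum_weight_X_mul_pderiv

end Bigrading

section IrrelevantIdeal

theorem admissible_one_zero_one_zero : Admissible (![1, 0, 1, 0] : Fin 4 → K) := by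
  simp [Admissible]

variable (K) in
/-- The irrelevant ideal `(x₀, x₁) (y₀, y₁)` of `ℙ¹ × ℙ¹`, whose zeros are the points of `K⁴` that
are not admissible. -/
def irrelevantIdeal : Ideal (MvPolynomial (Fin 4) K) :=
  Ideal.span {X 0, X 1} * Ideal.span {X 2, X 3}

theorem irrelevantIdeal_ne_bot : irrelevantIdeal K ≠ ⊥ := by
  simp [irrelevantIdeal]

theorem mem_zeroLocus_irrelevantIdeal_of_not_admissible {P : Fin 4 → K} (hP : ¬ Admissible P) :
    P ∈ zeroLocus K (irrelevantIdeal K) := by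
  have hspan : Ideal.span {X 0, X 1} ≤ vanishingIdeal K {P} ∨
      Ideal.span {X 2, X 3} ≤ vanishingIdeal K {P} := by
    simp only [Admissible, ne_eq, Prod.mk.injEq, not_and_or] at hP
    simpa [Ideal.span_le, Set.pair_subset_iff] using hP
  have hle := (Ideal.IsPrime.mul_le (P := vanishingIdeal K {P}) inferInstance).2 hspan
  exact le_zeroLocus_iff_le_vanishingIdeal.2 hle rfl

theorem mem_irrelevantIdeal_pow {m : ℕ × ℕ} {N : ℕ} (h₁ : N ≤ m.1) (h₂ : N ≤ m.2)
    {p : MvPolynomial (Fin 4) K} (hp : p ∈ bihomogeneousSubmodule K m) :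
    p ∈ irrelevantIdeal K ^ N := by
  have pow_mul_pow_mem (i j : Fin 4) {k l : ℕ} (h : N ≤ k + l) :
      (X i ^ k * X j ^ l : MvPolynomial (Fin 4) K) ∈ Ideal.span {X i, X j} ^ N := by
    refine Ideal.pow_le_pow_right h ?_
    rw [pow_add]
    exact Ideal.mul_mem_mul (Ideal.pow_mem_pow (Ideal.subset_span (by simp)) k)
      (Ideal.pow_mem_pow (Ideal.subset_span (by simp)) l)
  rw [p.as_sum]
  refine Ideal.sum_mem _ fun e he ↦ ?_
  have hdeg : (e 0 + e 1, e 2 + e 3) = m :=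
    weight_bidegreeWeight e ▸ hp (mem_support_iff.1 he)
  rw [monomial_eq, e.prod_fintype _ (by simp), Fin.prod_univ_four, mul_assoc (_ * _),
    irrelevantIdeal, mul_pow]
  exact Ideal.mul_mem_left _ _ (Ideal.mul_mem_mul (pow_mul_pow_mem 0 1 (by grind))
    (pow_mul_pow_mem 2 3 (by grind)))

variable [IsAlgClosed K]

theorem irrelevantIdeal_le_radical {I : Ideal (MvPolynomial (Fin 4) K)}
    (hI : ∀ P ∈ zeroLocus K I, ¬ Admissible P) : irrelevantIdeal K ≤ I.radical := by
  rw [← vanishingIdeal_zeroLocus_eq_radical (K := K), ← le_zeroLocus_iff_le_vanishingIdeal]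
  exact fun P hP ↦ mem_zeroLocus_irrelevantIdeal_of_not_admissible (hI P hP)

theorem exists_admissible_eval_eq_zero_of_irreducible {z : MvPolynomial (Fin 4) K}
    (hz : Irreducible z) : ∃ P, Admissible P ∧ eval P z = 0 := by
  by_contra! h
  have hprime : (Ideal.span {z}).IsPrime := (Ideal.span_singleton_prime hz.ne_zero).2 hz.prime
  have hle : irrelevantIdeal K ≤ Ideal.span {z} :=
    (irrelevantIdeal_le_radical fun P hP hadm ↦ h P hadm <| by
      simpa [aeval_eq_eval] using hP z (Ideal.mem_span_singleton_self z)).trans_eq hprime.radical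
  have not_dvd_two_X {i j : Fin 4} (hij : i ≠ j) :
      ¬ Ideal.span {X i, X j} ≤ Ideal.span {z} := fun hspan ↦ by
    simp only [Ideal.span_le, Set.pair_subset_iff, SetLike.mem_coe,
      Ideal.mem_span_singleton] at hspan
    exact hij (X_dvd_X.1 ((hz.dvd_symm X_prime.irreducible hspan.1).trans hspan.2))
  exact (hprime.mul_le.1 hle).elim (not_dvd_two_X (by decide)) (not_dvd_two_X (by decide))

end IrrelevantIdeal

section Jacobian

/-- The `2 × 2` minor of the Jacobian matrix of `(f, g)` in the columns `i` and `j`. -/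
def jacobianMinor (f g : MvPolynomial (Fin 4) K) (i j : Fin 4) : MvPolynomial (Fin 4) K :=
  pderiv i f * pderiv j g - pderiv j f * pderiv i g

/-- The ideal of all `2 × 2` minors of the Jacobian matrix of `(f, g)`. -/
def jacobianIdeal (f g : MvPolynomial (Fin 4) K) : Ideal (MvPolynomial (Fin 4) K) :=
  Ideal.span (Set.range fun q : Fin 4 × Fin 4 ↦ jacobianMinor f g q.1 q.2)

/-- The ideal generated by the two minors `∂(f,g)/∂(x₀,x₁)` and `∂(f,g)/∂(y₀,y₁)`. -/
def blockJacobianIdeal (f g : MvPolynomial (Fin 4) K) : Ideal (MvPolynomial (Fin 4) K) :=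
  Ideal.span {jacobianMinor f g 0 1, jacobianMinor f g 2 3}

variable {f g : MvPolynomial (Fin 4) K}

theorem jacobianMinor_self (i : Fin 4) : jacobianMinor f g i i = 0 := sub_self _

theorem jacobianMinor_swap (i j : Fin 4) : jacobianMinor f g j i = -jacobianMinor f g i j :=
  (neg_sub _ _).symm

theorem jacobianMinor_mem {i j : Fin 4} {m n : ℕ × ℕ} (hij : bidegreeWeight i = bidegreeWeight j)
    (hn : m + bidegreeWeight i = n) (hf : f ∈ bihomogeneousSubmodule K n)
    (hg : g ∈ bihomogeneousSubmodule K n) :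
    jacobianMinor f g i j ∈ bihomogeneousSubmodule K (m + m) :=
  have hn' := hij ▸ hn
  sub_mem ((IsWeightedHomogeneous.pderiv hf hn).mul (IsWeightedHomogeneous.pderiv hg hn'))
    ((IsWeightedHomogeneous.pderiv hf hn').mul (IsWeightedHomogeneous.pderiv hg hn))

theorem mul_pderiv_sub_mul_pderiv_mem {a b : ℕ} (ha : (a : K) ≠ 0) (hb : (b : K) ≠ 0)
    (hf : IsBihomogeneous a b f) (hg : IsBihomogeneous a b g) (i : Fin 4) :
    f * pderiv i g - g * pderiv i f ∈ blockJacobianIdeal f g := by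
  have euler_minor_fst : C (a : K) * (f * pderiv i g - g * pderiv i f)
      = X 0 * jacobianMinor f g 0 i + X 1 * jacobianMinor f g 1 i := by
    simp only [jacobianMinor]
    linear_combination pderiv i f * hg.euler_fst - pderiv i g * hf.euler_fst
  have euler_minor_snd : C (b : K) * (f * pderiv i g - g * pderiv i f)
      = X 2 * jacobianMinor f g 2 i + X 3 * jacobianMinor f g 3 i := by
    simp only [jacobianMinor]
    linear_combination pderiv i f * hg.euler_snd - pderiv i g * hf.euler_snd
  have hD : jacobianMinor f g 0 1 ∈ blockJacobianIdeal f g := Ideal.subset_span (by simp)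
  have hE : jacobianMinor f g 2 3 ∈ blockJacobianIdeal f g := Ideal.subset_span (by simp)
  have isUnit_C {c : K} (hc : c ≠ 0) : IsUnit (C c : MvPolynomial (Fin 4) K) := hc.isUnit.map C
  have hi : (i = 0 ∨ i = 1) ∨ (i = 2 ∨ i = 3) := by omega
  rcases hi with hi | hi
  · rw [← Ideal.unit_mul_mem_iff_mem _ (isUnit_C ha), euler_minor_fst]
    apply add_mem <;> apply Ideal.mul_mem_left <;> rcases hi with rfl | rfl <;>
      simp [jacobianMinor_self, jacobianMinor_swap 0 1, hD]
  · rw [← Ideal.unit_mul_mem_iff_mem _ (isUnit_C hb), euler_minor_snd]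
    apply add_mem <;> apply Ideal.mul_mem_left <;> rcases hi with rfl | rfl <;>
      simp [jacobianMinor_self, jacobianMinor_swap 2 3, hE]

theorem span_pair_mul_jacobianIdeal_le {a b : ℕ} (ha : (a : K) ≠ 0) (hb : (b : K) ≠ 0)
    (hf : IsBihomogeneous a b f) (hg : IsBihomogeneous a b g) :
    Ideal.span {f, g} * jacobianIdeal f g ≤ blockJacobianIdeal f g := by
  rw [jacobianIdeal, Ideal.span_mul_span', Ideal.span_le, Set.mul_subset_iff]
  rintro h hh _ ⟨⟨i, j⟩, rfl⟩
  have hi := mul_pderiv_sub_mul_pderiv_mem ha hb hf hg i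
  have hj := mul_pderiv_sub_mul_pderiv_mem ha hb hf hg j
  have minor_expansion : h * jacobianMinor f g i j
      = pderiv i h * (f * pderiv j g - g * pderiv j f)
        - pderiv j h * (f * pderiv i g - g * pderiv i f) := by
    rcases hh with rfl | rfl <;> simp only [jacobianMinor] <;> ring
  rw [SetLike.mem_coe, minor_expansion]
  exact sub_mem (Ideal.mul_mem_left _ _ hj) (Ideal.mul_mem_left _ _ hi)

theorem mem_zeroLocus_jacobianIdeal_iff {P : Fin 4 → K} :
    P ∈ zeroLocus K (jacobianIdeal f g) ↔ ∀ i j, eval P (jacobianMinor f g i j) = 0 := by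
  simp only [jacobianIdeal, zeroLocus_span, Set.mem_ofPred_eq, Set.forall_mem_range, Prod.forall,
    aeval_eq_eval]

theorem jacobianMinor_ne_zero_of_jacobianIdeal_ne_bot {a b : ℕ}
    (ha : (a : K) ≠ 0) (hb : (b : K) ≠ 0) (hf : IsBihomogeneous a b f)
    (hg : IsBihomogeneous a b g) (hJ : jacobianIdeal f g ≠ ⊥) :
    jacobianMinor f g 0 1 ≠ 0 ∨ jacobianMinor f g 2 3 ≠ 0 := by
  by_contra! h
  have hle := span_pair_mul_jacobianIdeal_le ha hb hf hg
  rw [blockJacobianIdeal, h.1, h.2, Set.pair_eq_singleton, Ideal.span_singleton_zero, le_bot_iff,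
    Ideal.mul_eq_bot, or_iff_left hJ, Ideal.span_eq_bot] at hle
  have hf0 : f = 0 := hle f (by simp)
  exact hJ (by simp [jacobianIdeal, jacobianMinor, hf0])

theorem isRelPrime_of_forall_not_admissible [IsAlgClosed K]
    (hJ : ∀ P ∈ zeroLocus K (jacobianIdeal f g), ¬ Admissible P) : IsRelPrime f g := by
  refine WfDvdMonoid.isRelPrime_of_no_irreducible_factors ?_ ?_
  · rintro ⟨rfl, -⟩
    exact hJ _ (mem_zeroLocus_jacobianIdeal_iff.2 (by simp [jacobianMinor]))
      admissible_one_zero_one_zero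
  · rintro z hz ⟨f', rfl⟩ ⟨g', rfl⟩
    obtain ⟨P, hP, hzP⟩ := exists_admissible_eval_eq_zero_of_irreducible hz
    refine hJ P (mem_zeroLocus_jacobianIdeal_iff.2 fun i j ↦ ?_) hP
    simp only [jacobianMinor, pderiv_mul, map_sub, map_mul, map_add, hzP]
    ring

end Jacobian

section Pencil

open scoped Pointwise

variable {a b : ℕ} {f g : MvPolynomial (Fin 4) K}

theorem smul_sup_smul_le_of_irrelevantIdeal_pow_le (ha : (a : K) ≠ 0) (hb : (b : K) ≠ 0)
    (hf : IsBihomogeneous a b f) (hg : IsBihomogeneous a b g) {N : ℕ}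
    (hN : irrelevantIdeal K ^ N ≤ jacobianIdeal f g) {c d m s t : ℕ × ℕ}
    (hD : jacobianMinor f g 0 1 ∈ bihomogeneousSubmodule K c)
    (hE : jacobianMinor f g 2 3 ∈ bihomogeneousSubmodule K d)
    (hs : c + s = (a, b) + m) (ht : d + t = (a, b) + m) (hm₁ : N ≤ m.1) (hm₂ : N ≤ m.2) :
    f • bihomogeneousSubmodule K m ⊔ g • bihomogeneousSubmodule K m
      ≤ jacobianMinor f g 0 1 • bihomogeneousSubmodule K s
        ⊔ jacobianMinor f g 2 3 • bihomogeneousSubmodule K t := by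
  have smul_le {h : MvPolynomial (Fin 4) K} (hh : IsBihomogeneous a b h)
      (hfg : h ∈ Ideal.span {f, g}) : h • bihomogeneousSubmodule K m
        ≤ jacobianMinor f g 0 1 • bihomogeneousSubmodule K s
          ⊔ jacobianMinor f g 2 3 • bihomogeneousSubmodule K t := by
    rintro _ ⟨p, hp, rfl⟩
    have hdeg : h * p ∈ bihomogeneousSubmodule K ((a, b) + m) :=
      (mem_bihomogeneousSubmodule_iff.2 hh).mul hp
    have hmem : h * p ∈ blockJacobianIdeal f g :=
      span_pair_mul_jacobianIdeal_le ha hb hf hg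
        (Ideal.mul_mem_mul hfg (hN (mem_irrelevantIdeal_pow hm₁ hm₂ hp)))
    exact mem_smul_sup_smul_of_mem_span_pair (bihomogeneousSubmodule K) hD hE hs ht hdeg hmem
  exact sup_le (smul_le hf (Ideal.subset_span (by simp)))
    (smul_le hg (Ideal.subset_span (by simp)))

theorem finrank_le_of_irrelevantIdeal_pow_le (ha : (a : K) ≠ 0) (hb : (b : K) ≠ 0)
    (hf : IsBihomogeneous a b f) (hg : IsBihomogeneous a b g) (hfg : IsRelPrime f g) {N : ℕ}
    (hN : irrelevantIdeal K ^ N ≤ jacobianIdeal f g) {c d r k : ℕ × ℕ}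
    (hD : jacobianMinor f g 0 1 ∈ bihomogeneousSubmodule K c)
    (hE : jacobianMinor f g 2 3 ∈ bihomogeneousSubmodule K d)
    (hk : c + d + k = (a, b) + ((a, b) + r)) (hr₁ : N ≤ a + r.1) (hr₂ : N ≤ b + r.2) :
    2 * Module.finrank K (bihomogeneousSubmodule K ((a, b) + r))
        + Module.finrank K (bihomogeneousSubmodule K k)
      ≤ Module.finrank K (bihomogeneousSubmodule K (d + k))
        + Module.finrank K (bihomogeneousSubmodule K (c + k))
        + Module.finrank K (bihomogeneousSubmodule K r) := by
  have hJ : jacobianIdeal f g ≠ ⊥ :=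
    ne_bot_of_le_ne_bot (pow_ne_zero N irrelevantIdeal_ne_bot) hN
  have hf0 : f ≠ 0 := by rintro rfl; simp [jacobianIdeal, jacobianMinor] at hJ
  have hg0 : g ≠ 0 := by rintro rfl; simp [jacobianIdeal, jacobianMinor] at hJ
  have finrank_le := Submodule.finrank_mono <|
    smul_sup_smul_le_of_irrelevantIdeal_pow_le ha hb hf hg hN hD hE
      (s := d + k) (t := c + k) (by rw [← hk, add_assoc]) (by rw [← hk]; abel) hr₁ hr₂
  have finrank_minors_le := finrank_smul_sup_smul_add_finrank_le (K := K)
    (jacobianMinor_ne_zero_of_jacobianIdeal_ne_bot ha hb hf hg hJ)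
    (U := bihomogeneousSubmodule K k) (V := bihomogeneousSubmodule K (d + k))
    (W := bihomogeneousSubmodule K (c + k))
    (by rintro _ ⟨p, hp, rfl⟩; exact hE.mul hp) (by rintro _ ⟨p, hp, rfl⟩; exact hD.mul hp)
  have le_finrank_pencil := finrank_add_finrank_le_of_isRelPrime (bihomogeneousSubmodule K)
    (r := r) (W := bihomogeneousSubmodule K ((a, b) + r)) hfg hf0 hg0
    (mem_bihomogeneousSubmodule_iff.2 hg)
  omega

theorem not_irrelevantIdeal_pow_le_jacobianIdeal (ha : (a : K) ≠ 0) (hb : (b : K) ≠ 0)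
    (hf : IsBihomogeneous a b f) (hg : IsBihomogeneous a b g) (hfg : IsRelPrime f g) (N : ℕ) :
    ¬ irrelevantIdeal K ^ N ≤ jacobianIdeal f g := by
  intro hN
  obtain ⟨a, rfl⟩ : ∃ a', a = a' + 1 := Nat.exists_eq_succ_of_ne_zero (by rintro rfl; simp at ha)
  obtain ⟨b, rfl⟩ : ∃ b', b = b' + 1 := Nat.exists_eq_succ_of_ne_zero (by rintro rfl; simp at hb)
  have hfB := mem_bihomogeneousSubmodule_iff.2 hf
  have hgB := mem_bihomogeneousSubmodule_iff.2 hg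
  have hD := jacobianMinor_mem (i := 0) (j := 1) (m := (a, b + 1)) rfl rfl hfB hgB
  have hE := jacobianMinor_mem (i := 2) (j := 3) (m := (a + 1, b)) rfl rfl hfB hgB
  have hdim := finrank_le_of_irrelevantIdeal_pow_le ha hb hf hg hfg hN hD hE
    (r := (2 * a + N, 2 * b + N)) (k := (N, N)) (by ext <;> simp <;> ring) (by omega) (by omega)
  simp only [finrank_bihomogeneousSubmodule, Prod.mk_add_mk] at hdim
  -- The two sides of `hdim` differ by `6 * a * b + 2 * a + 2 * b + 2`.
  nlinarith only [hdim, Nat.zero_le (a * b)]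

theorem exists_admissible_mem_zeroLocus_jacobianIdeal [IsAlgClosed K]
    (ha : (a : K) ≠ 0) (hb : (b : K) ≠ 0)
    (hf : IsBihomogeneous a b f) (hg : IsBihomogeneous a b g) :
    ∃ P, Admissible P ∧ P ∈ zeroLocus K (jacobianIdeal f g) := by
  by_contra! h
  have hJ : ∀ P ∈ zeroLocus K (jacobianIdeal f g), ¬ Admissible P := fun P hP hadm ↦ h P hadm hP
  obtain ⟨N, hN⟩ := Ideal.exists_pow_le_of_le_radical_of_fg (irrelevantIdeal_le_radical hJ)
    (IsNoetherian.noetherian _)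
  have hfg := isRelPrime_of_forall_not_admissible hJ
  exact not_irrelevantIdeal_pow_le_jacobianIdeal ha hb hf hg hfg N hN

end Pencil

theorem pencil_contains_singular_member_general
    {K : Type*} [Field K] [IsAlgClosed K] (a b : ℕ) (ha : (a : K) ≠ 0) (hb : (b : K) ≠ 0)
    (f g : MvPolynomial (Fin 4) K)
    (hfbi : IsBihomogeneous a b f) (hgbi : IsBihomogeneous a b g)
    (hfsm : DefinesSmoothCurve f) (hgsm : DefinesSmoothCurve g) :
    ∃ (u v : K) (P : Fin 4 → K), u ≠ 0 ∧ v ≠ 0 ∧ Admissible P ∧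
      ∀ i : Fin 4, eval P (pderiv i (C u * f + C v * g)) = 0 := by
  obtain ⟨P, hP, hPJ⟩ := exists_admissible_mem_zeroLocus_jacobianIdeal ha hb hfbi hgbi
  have minors_eq_zero : ∀ i j, eval P (pderiv i f) * eval P (pderiv j g)
      - eval P (pderiv j f) * eval P (pderiv i g) = 0 := by
    simpa [jacobianMinor] using mem_zeroLocus_jacobianIdeal_iff.1 hPJ
  have gradient_ne_zero {h : MvPolynomial (Fin 4) K} (hh : DefinesSmoothCurve h) :
      (fun i ↦ eval P (pderiv i h)) ≠ 0 := Function.ne_iff.2 (hh P hP)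
  obtain ⟨u, v, hu, hv, huv⟩ := exists_smul_add_smul_eq_zero_of_minors_eq_zero
    (gradient_ne_zero hfsm) (gradient_ne_zero hgsm) minors_eq_zero
  exact ⟨u, v, P, hu, hv, hP, fun i ↦ by simpa [pderiv_C_mul] using congrFun huv i⟩

/-- The pencil spanned by two non-proportional smooth members of
`|O_Q(a,b)|` contains a singular member, necessarily with both coefficients
nonzero. -/
theorem pencil_contains_singular_member
    {K : Type*} [Field K] [IsAlgClosed K] [CharZero K]
    (a b : ℕ) (ha : 1 ≤ a) (hb : 1 ≤ b)
    (f g : MvPolynomial (Fin 4) K)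
    (hfbi : IsBihomogeneous a b f) (hgbi : IsBihomogeneous a b g)
    (hprop : ¬ ∃ c : K, g = c • f ∨ f = c • g)
    (hfsm : DefinesSmoothCurve f) (hgsm : DefinesSmoothCurve g) :
    ∃ (u v : K) (P : Fin 4 → K), u ≠ 0 ∧ v ≠ 0 ∧ Admissible P ∧
      ∀ i : Fin 4, eval P (pderiv i (C u * f + C v * g)) = 0 :=
  pencil_contains_singular_member_general a b (Nat.cast_ne_zero.2 (by omega))
    (Nat.cast_ne_zero.2 (by omega)) f g hfbi hgbi hfsm hgsm
end
end

section
/- Let K be an algebraically closed field of characteristic 0, let a, b ≥ 2 be integers, and let f ∈ K[x₀,x₁,y₀,y₁] be bihomogeneous of bidegree (a,b) defining a smooth curve. Suppose p₀, p₁ are in the K-span of {x₀, x₁}, q₀, q₁ are in the K-span of {y₀, y₁}, and c ∈ K, with p₀·∂f/∂x₀ + p₁·∂f/∂x₁ + q₀·∂f/∂y₀ + q₁·∂f/∂y₁ = c·f. Then there exist s, t ∈ K such that p₀ = s·x₀, p₁ = s·x₁, q₀ = t·y₀, and q₁ = t·y₁. -/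
/-!
A logarithmic vector field has block diagonal matrix `M = A ⊕ B`. Subtracting multiples of the two
Euler fields makes any product `P` of an eigenline of `A` and an eigenline of `B` a zero of the
field, at the cost of replacing the factor `c` by `γ = c - l a - m b`, where `l` and `m` are the
eigenvalues. Differentiating the semi-invariance of `f` at such a fixed point relates `γ` to the
eigenvalues and to the first and second differentials of `f` at `P`.

* If `A` or `B` has a nontrivial Jordan block, the relations for the second differential force the
  curve to be singular at the fixed point.
* If `A` and `B` are both diagonalizable with distinct eigenvalues, smoothness at each of the four
  fixed points determines `c` up to three choices. Comparing opposite fixed points gives two linear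
  relations with natural coefficients between the eigenvalue differences, one for each pair, and
  their signs are incompatible.
* If `A` is diagonalizable with distinct eigenvalues and `B` is scalar, at least one of the two
  lines of fixed points has `γ ≠ 0`, so the curve contains it; the derivative of `f` transverse to
  such a line is a binary form of degree `b > 0`, and the curve is singular at its zeros.
-/

noncomputable section
open MvPolynomial

variable {K : Type*} [Field K]

section LinearVectorFields

open scoped Matrix

variable {σ R : Type*} [Fintype σ] [CommRing R]

lemma derivation_sum_apply {ι A N : Type*} [CommRing A] [Algebra R A] [AddCommGroup N] [Module A N]
    [Module R N] (s : Finset ι) (D : ι → Derivation R A N) (f : A) :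
    (∑ i ∈ s, D i) f = ∑ i ∈ s, D i f :=
  map_sum ((Pi.evalAddMonoidHom (fun _ : A => N) f).comp Derivation.coeFnAddMonoidHom) D s

/-- The derivative `∑ i, u i • ∂/∂X i` of polynomials in the constant direction `u`. -/
def dirDeriv : (σ → R) →ₗ[R] Derivation R (MvPolynomial σ R) (MvPolynomial σ R) :=
  Fintype.linearCombination R pderiv

/-- The vector field on affine space whose value at the point `P` is `M *ᵥ P`. -/
def linearField : Matrix σ σ R →ₗ[R] Derivation R (MvPolynomial σ R) (MvPolynomial σ R) where
  toFun M := ∑ j, (X j : MvPolynomial σ R) • dirDeriv (M.col j)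
  map_add' M N := by
    simp only [← Finset.sum_add_distrib, ← smul_add, ← map_add]
    rfl
  map_smul' c M := by
    simp only [Finset.smul_sum, RingHom.id_apply, smul_comm c, ← map_smul]
    rfl

lemma dirDeriv_apply (u : σ → R) (f : MvPolynomial σ R) :
    dirDeriv u f = ∑ i, u i • pderiv i f := by
  simp [dirDeriv, Fintype.linearCombination_apply, derivation_sum_apply]

lemma dirDeriv_X (u : σ → R) (i : σ) : dirDeriv u (X i) = C (u i) := by
  classical
  simp [dirDeriv_apply, pderiv_X, Pi.single_apply, smul_eq_C_mul]

lemma dirDeriv_single [DecidableEq σ] (i : σ) (r : R) :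
    dirDeriv (Pi.single i r) = r • pderiv i :=
  Fintype.linearCombination_apply_single R pderiv i r

lemma linearField_apply (M : Matrix σ σ R) (f : MvPolynomial σ R) :
    linearField M f = ∑ j, X j * dirDeriv (M.col j) f := by
  simp [linearField, derivation_sum_apply]

lemma linearField_diagonal [DecidableEq σ] (d : σ → R) (f : MvPolynomial σ R) :
    linearField (Matrix.diagonal d) f = ∑ i, d i • (X i * pderiv i f) := by
  simp [linearField_apply, Matrix.col_diagonal, dirDeriv_single]

lemma linearField_diagonal_of_isWeightedHomogeneous [DecidableEq σ] {wt : σ → ℕ} {n : ℕ}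
    {f : MvPolynomial σ R} (hf : IsWeightedHomogeneous wt f n) :
    linearField (Matrix.diagonal fun i => (wt i : R)) f = (n : R) • f := by
  simp only [linearField_diagonal, Nat.cast_smul_eq_nsmul, hf.sum_weight_X_mul_pderiv]

lemma lie_dirDeriv_dirDeriv (u v : σ → R) : ⁅dirDeriv u, dirDeriv v⁆ = 0 :=
  derivation_ext fun i => by simp [Derivation.commutator_apply, dirDeriv_X]

lemma lie_dirDeriv_linearField (u : σ → R) (M : Matrix σ σ R) :
    ⁅dirDeriv u, linearField M⁆ = dirDeriv (M *ᵥ u) :=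
  derivation_ext fun i => by
    simp [Derivation.commutator_apply, linearField_apply, dirDeriv_X,
      Matrix.mulVec, dotProduct, mul_comm]

lemma dirDeriv_comm (u v : σ → R) (f : MvPolynomial σ R) :
    dirDeriv u (dirDeriv v f) = dirDeriv v (dirDeriv u f) :=
  sub_eq_zero.mp <| by
    simpa only [Derivation.commutator_apply, Derivation.coe_zero, Pi.zero_apply] using
      DFunLike.congr_fun (lie_dirDeriv_dirDeriv u v) f

lemma linearField_dirDeriv (M : Matrix σ σ R) (u : σ → R) (f : MvPolynomial σ R) :
    linearField M (dirDeriv u f) = dirDeriv u (linearField M f) - dirDeriv (M *ᵥ u) f := by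
  rw [← lie_dirDeriv_linearField, Derivation.commutator_apply, sub_sub_cancel]

/-- The differential of `f` at the point `P`, as a linear functional on directions. -/
def differential (f : MvPolynomial σ R) (P : σ → R) : (σ → R) →ₗ[R] R where
  toFun u := eval P (dirDeriv u f)
  map_add' u v := by simp
  map_smul' c u := by simp [smul_eval]

/-- The second differential of `f` at the point `P`, as a bilinear form on directions. -/
def hessian (f : MvPolynomial σ R) (P : σ → R) : (σ → R) →ₗ[R] (σ → R) →ₗ[R] R :=
  LinearMap.mk₂ R (fun u v => eval P (dirDeriv u (dirDeriv v f)))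
    (by simp) (by simp [smul_eval]) (by simp) (by simp [smul_eval])

lemma differential_apply (f : MvPolynomial σ R) (P u : σ → R) :
    differential f P u = eval P (dirDeriv u f) :=
  rfl

lemma hessian_apply (f : MvPolynomial σ R) (P u v : σ → R) :
    hessian f P u v = differential (dirDeriv v f) P u :=
  rfl

lemma hessian_comm (f : MvPolynomial σ R) (P u v : σ → R) :
    hessian f P u v = hessian f P v u :=
  congrArg (eval P) (dirDeriv_comm u v f)

lemma eval_linearField (M : Matrix σ σ R) (f : MvPolynomial σ R) (P : σ → R) :
    eval P (linearField M f) = differential f P (M *ᵥ P) := by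
  have mulVec_eq : M *ᵥ P = ∑ j, P j • M.col j := by
    ext i
    simp [Matrix.mulVec, dotProduct, mul_comm]
  simp [linearField_apply, mulVec_eq, differential_apply]

section SemiInvariant

variable {M : Matrix σ σ R} {f : MvPolynomial σ R} {γ : R}

lemma differential_mulVec_self (hf : linearField M f = γ • f) (P : σ → R) :
    differential f P (M *ᵥ P) = γ * eval P f := by
  rw [← eval_linearField, hf, smul_eval]

lemma linearField_dirDeriv_of_mulVec_eq_zero (hf : linearField M f = γ • f) {u : σ → R}
    (hu : M *ᵥ u = 0) : linearField M (dirDeriv u f) = γ • dirDeriv u f := by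
  simp [linearField_dirDeriv, hf, hu]

lemma hessian_mulVec_self (hf : linearField M f = γ • f) (P u : σ → R) :
    hessian f P (M *ᵥ P) u = γ * differential f P u - differential f P (M *ᵥ u) := by
  rw [hessian_apply, ← eval_linearField, linearField_dirDeriv, hf]
  simp [differential_apply, smul_eval]

lemma eval_eq_zero_of_mulVec_eq_zero (hf : linearField M f = γ • f) {P : σ → R}
    (hP : M *ᵥ P = 0) : γ * eval P f = 0 := by
  rw [← differential_mulVec_self hf, hP, map_zero]

lemma mul_differential_of_mulVec_eq_zero (hf : linearField M f = γ • f) {P : σ → R}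
    (hP : M *ᵥ P = 0) (u : σ → R) :
    γ * differential f P u = differential f P (M *ᵥ u) := by
  have h := hessian_mulVec_self hf P u
  rw [hP, map_zero, LinearMap.zero_apply] at h
  exact (sub_eq_zero.mp h.symm)

lemma mul_hessian_of_mulVec_eq_zero (hf : linearField M f = γ • f) {P : σ → R}
    (hP : M *ᵥ P = 0) (u v : σ → R) :
    γ * hessian f P u v = hessian f P (M *ᵥ u) v + hessian f P u (M *ᵥ v) := by
  have h : eval P (linearField M (dirDeriv u (dirDeriv v f))) = 0 := by
    rw [eval_linearField, hP, map_zero]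
  rw [linearField_dirDeriv, linearField_dirDeriv, hf] at h
  simp only [map_sub, Derivation.map_smul, smul_eval] at h
  change γ * hessian f P u v - hessian f P u (M *ᵥ v) - hessian f P (M *ᵥ u) v = 0 at h
  linear_combination h

end SemiInvariant

end LinearVectorFields

section LineRestriction

open scoped Matrix

variable {σ R : Type*} [CommRing R]

/-- The univariate polynomial `f (P + s • u)` in the variable `s`. -/
def restrictLine (P u : σ → R) : MvPolynomial σ R →ₐ[R] Polynomial R :=
  aeval fun i => Polynomial.C (P i) + Polynomial.C (u i) * Polynomial.X

lemma restrictLine_X (P u : σ → R) (i : σ) :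
    restrictLine P u (X i) = Polynomial.C (P i) + Polynomial.C (u i) * Polynomial.X :=
  aeval_X _ i

lemma eval_restrictLine (P u : σ → R) (f : MvPolynomial σ R) (s : R) :
    (restrictLine P u f).eval s = eval (P + s • u) f := by
  induction f using MvPolynomial.induction_on with
  | C c => simp [restrictLine]
  | add f g hf hg => simp [hf, hg]
  | mul_X f i hf => simp [hf, restrictLine_X, mul_comm (u i)]

variable [Fintype σ]

lemma derivative_restrictLine (P u : σ → R) (f : MvPolynomial σ R) :
    (restrictLine P u f).derivative = restrictLine P u (dirDeriv u f) := by
  induction f using MvPolynomial.induction_on with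
  | C c => simp [restrictLine]
  | add f g hf hg => simp [hf, hg]
  | mul_X f i hf =>
    simp only [map_mul, Polynomial.derivative_mul, hf, restrictLine_X, Polynomial.derivative_C,
      Polynomial.derivative_X, Derivation.leibniz, dirDeriv_X, smul_eq_mul,
      map_add, algHom_C, Polynomial.algebraMap_eq]
    ring

lemma differential_eq_zero_of_forall_eval_ne_zero [IsAlgClosed K]
    {f : MvPolynomial σ K} {P u : σ → K} (hf : ∀ s : K, eval (P + s • u) f ≠ 0) (s : K) :
    differential f (P + s • u) u = 0 := by
  have hdeg : (restrictLine P u f).degree = 0 := by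
    by_contra hdeg
    obtain ⟨t, ht⟩ := IsAlgClosed.exists_root _ hdeg
    exact hf t (eval_restrictLine P u f t ▸ ht)
  rw [differential_apply, ← eval_restrictLine, ← derivative_restrictLine,
    Polynomial.eq_C_of_degree_eq_zero hdeg, Polynomial.derivative_C, Polynomial.eval_zero]

-- If `f` had no zero on either line it would be constant along both, so its differential at the
-- common point `P + u + v` would vanish on `u + v`, against Euler's identity there.
lemma exists_eval_eq_zero_of_mulVec_add [IsAlgClosed K]
    {M : Matrix σ σ K} {f : MvPolynomial σ K} {γ : K} (hγ : γ ≠ 0) (hf : linearField M f = γ • f)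
    {P u v : σ → K} (hM : M *ᵥ (P + u + v) = u + v) :
    (∃ s : K, eval (P + u + s • v) f = 0) ∨ ∃ s : K, eval (P + v + s • u) f = 0 := by
  by_contra! hne
  have hv := differential_eq_zero_of_forall_eval_ne_zero hne.1 1
  have hu := differential_eq_zero_of_forall_eval_ne_zero hne.2 1
  rw [one_smul] at hu hv
  rw [add_right_comm] at hu
  have hEuler := differential_mulVec_self hf (P + u + v)
  rw [hM, map_add, hu, hv, add_zero] at hEuler
  exact mul_ne_zero hγ (by simpa using hne.1 1) hEuler.symm

end LineRestriction

section TriangularBasis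

open scoped Matrix

/-- A basis `v, v'` of the plane in which the matrix `A` is upper triangular, with diagonal entries
`l, l'` and off-diagonal entry `r`. -/
structure IsTriangularBasis (A : Matrix (Fin 2) (Fin 2) K) (v v' : Fin 2 → K) (l l' r : K) :
    Prop where
  linearIndependent : LinearIndependent K ![v, v']
  mulVec_fst : A *ᵥ v = l • v
  mulVec_snd : A *ᵥ v' = l' • v' + r • v

namespace IsTriangularBasis

variable {A : Matrix (Fin 2) (Fin 2) K} {v v' : Fin 2 → K} {l l' r : K}

lemma fst_ne_zero (h : IsTriangularBasis A v v' l l' r) : v ≠ 0 :=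
  h.linearIndependent.ne_zero 0

lemma ext_linearMap (h : IsTriangularBasis A v v' l l' r) {V : Type*} [AddCommGroup V] [Module K V]
    {φ ψ : (Fin 2 → K) →ₗ[K] V} (hv : φ v = ψ v) (hv' : φ v' = ψ v') : φ = ψ :=
  LinearMap.ext_on_range (h.linearIndependent.span_eq_top_of_card_eq_finrank' (by simp))
    (Fin.forall_fin_two.mpr ⟨hv, hv'⟩)

lemma reverse (h : IsTriangularBasis A v v' l l' 0) : IsTriangularBasis A v' v l' l 0 where
  linearIndependent := LinearIndependent.pair_symm_iff.mp h.linearIndependent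
  mulVec_fst := by simpa using h.mulVec_snd
  mulVec_snd := by simpa using h.mulVec_fst

lemma eq_smul_one (h : IsTriangularBasis A v v' l l 0) : A = l • 1 := by
  refine Matrix.toLin'.injective (h.ext_linearMap ?_ ?_)
  · simpa [Matrix.smul_mulVec] using h.mulVec_fst
  · simpa [Matrix.smul_mulVec] using h.mulVec_snd

lemma diagonalize (h : IsTriangularBasis A v v' l l' r) (hl : l ≠ l') :
    IsTriangularBasis A v ((r / (l' - l)) • v + v') l l' 0 where
  linearIndependent :=
    (LinearIndependent.pair_add_smul_right_iff _).mpr h.linearIndependent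
  mulVec_fst := h.mulVec_fst
  mulVec_snd := by
    have hl' : l' - l ≠ 0 := sub_ne_zero.mpr hl.symm
    rw [Matrix.mulVec_add, Matrix.mulVec_smul, h.mulVec_fst, h.mulVec_snd]
    match_scalars
    · field_simp
      ring
    · rfl

end IsTriangularBasis

lemma exists_isTriangularBasis [IsAlgClosed K] (A : Matrix (Fin 2) (Fin 2) K) :
    ∃ v v' l l' r, IsTriangularBasis A v v' l l' r := by
  obtain ⟨l, hl⟩ := Module.End.exists_eigenvalue A.mulVecLin
  obtain ⟨v, hv⟩ := hl.exists_hasEigenvector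
  obtain ⟨v', hvv'⟩ := exists_linearIndependent_pair_of_one_lt_finrank (R := K) (by simp) hv.2
  have hspan : A *ᵥ v' ∈ Submodule.span K {v, v'} := by
    have htop := hvv'.span_eq_top_of_card_eq_finrank' (by simp)
    rw [Matrix.range_cons_cons_empty] at htop
    exact htop ▸ Submodule.mem_top
  obtain ⟨r, l', hA⟩ := Submodule.mem_span_pair.mp hspan
  exact ⟨v, v', l, l', r, hvv', hv.apply_eq_smul, by rw [← hA, add_comm]⟩

lemma exists_isTriangularBasis_eq_or_eq_zero [IsAlgClosed K] (A : Matrix (Fin 2) (Fin 2) K) :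
    ∃ v v' l l' r, IsTriangularBasis A v v' l l' r ∧ (l = l' ∨ r = 0) := by
  obtain ⟨v, v', l, l', r, h⟩ := exists_isTriangularBasis A
  obtain hl | hl := eq_or_ne l l'
  · exact ⟨v, v', l, l', r, h, .inl hl⟩
  · exact ⟨_, _, _, _, _, h.diagonalize hl, .inr rfl⟩

lemma exists_isTriangularBasis_smul_one {v : Fin 2 → K} (l : K) (hv : v ≠ 0) :
    ∃ v', IsTriangularBasis (l • 1) v v' l l 0 := by
  obtain ⟨v', h⟩ := exists_linearIndependent_pair_of_one_lt_finrank (R := K) (by simp) hv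
  exact ⟨v', h, by simp [Matrix.smul_mulVec], by simp [Matrix.smul_mulVec]⟩

end TriangularBasis

section LogarithmicFields

open scoped Matrix

variable {σ : Type*} [Fintype σ]

/-- The polynomial `f`, in the homogeneous coordinates of a product of two projective lines, defines
a smooth curve of bidegree `(a, b)`, and the vector field of `M` multiplies it by `c`. The maps `ι`
and `κ` are the inclusions of the coordinate planes of the two factors, `E` and `F` the matrices of
the Euler fields, and `A` and `B` the blocks of `M`. Leaving the coordinates abstract makes the two
factors interchangeable. -/
structure IsLogarithmic (ι κ : (Fin 2 → K) →ₗ[K] σ → K) (E F M : Matrix σ σ K)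
    (A B : Matrix (Fin 2) (Fin 2) K) (a b : ℕ) (c : K) (f : MvPolynomial σ K) : Prop where
  euler_left_left : ∀ v, E *ᵥ ι v = ι v
  euler_left_right : ∀ w, E *ᵥ κ w = 0
  euler_right_left : ∀ v, F *ᵥ ι v = 0
  euler_right_right : ∀ w, F *ᵥ κ w = κ w
  mulVec_left : ∀ v, M *ᵥ ι v = ι (A *ᵥ v)
  mulVec_right : ∀ w, M *ᵥ κ w = κ (B *ᵥ w)
  linearField_euler_left : linearField E f = (a : K) • f
  linearField_euler_right : linearField F f = (b : K) • f
  linearField_eq : linearField M f = c • f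
  smooth : ∀ v w, v ≠ 0 → w ≠ 0 →
    differential f (ι v + κ w) ∘ₗ ι ≠ 0 ∨ differential f (ι v + κ w) ∘ₗ κ ≠ 0

namespace IsLogarithmic

variable {ι κ : (Fin 2 → K) →ₗ[K] σ → K} {E F M : Matrix σ σ K}
  {A B : Matrix (Fin 2) (Fin 2) K} {a b : ℕ} {c : K} {f : MvPolynomial σ K}
  {v v' w w' : Fin 2 → K} {l l' m m' r s : K}

lemma swap (h : IsLogarithmic ι κ E F M A B a b c f) :
    IsLogarithmic κ ι F E M B A b a c f where
  euler_left_left := h.euler_right_right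
  euler_left_right := h.euler_right_left
  euler_right_left := h.euler_left_right
  euler_right_right := h.euler_left_left
  mulVec_left := h.mulVec_right
  mulVec_right := h.mulVec_left
  linearField_euler_left := h.linearField_euler_right
  linearField_euler_right := h.linearField_euler_left
  linearField_eq := h.linearField_eq
  smooth w v hw hv := add_comm (ι v) (κ w) ▸ (h.smooth v w hv hw).symm

lemma linearField_shift (h : IsLogarithmic ι κ E F M A B a b c f) (l m : K) :
    linearField (M - l • E - m • F) f = (c - l * a - m * b) • f := by
  simp only [map_sub, map_smul, Derivation.sub_apply, Derivation.smul_apply, h.linearField_eq,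
    h.linearField_euler_left, h.linearField_euler_right, smul_smul, sub_smul]

lemma shift_mulVec_left (h : IsLogarithmic ι κ E F M A B a b c f) (l m : K) (v : Fin 2 → K) :
    (M - l • E - m • F) *ᵥ ι v = ι (A *ᵥ v - l • v) := by
  simp only [Matrix.sub_mulVec, Matrix.smul_mulVec, h.mulVec_left, h.euler_left_left,
    h.euler_right_left, smul_zero, sub_zero, map_sub, map_smul]

lemma shift_mulVec_left_snd (h : IsLogarithmic ι κ E F M A B a b c f)
    (hA : IsTriangularBasis A v v' l l' r) (m : K) :
    (M - l • E - m • F) *ᵥ ι v' = (l' - l) • ι v' + r • ι v := by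
  rw [h.shift_mulVec_left, hA.mulVec_snd, add_sub_right_comm, ← sub_smul, map_add, map_smul,
    map_smul]

lemma shift_mulVec_right_snd (h : IsLogarithmic ι κ E F M A B a b c f)
    (hB : IsTriangularBasis B w w' m m' s) (l : K) :
    (M - l • E - m • F) *ᵥ κ w' = (m' - m) • κ w' + s • κ w := by
  rw [sub_right_comm, h.swap.shift_mulVec_left_snd hB]

lemma shift_mulVec_add_eq_zero (h : IsLogarithmic ι κ E F M A B a b c f)
    (hA : IsTriangularBasis A v v' l l' r) (hB : IsTriangularBasis B w w' m m' s) :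
    (M - l • E - m • F) *ᵥ (ι v + κ w) = 0 := by
  rw [Matrix.mulVec_add, h.shift_mulVec_left, sub_right_comm, h.swap.shift_mulVec_left,
    hA.mulVec_fst, hB.mulVec_fst, sub_self, sub_self, map_zero, map_zero, add_zero]

lemma differential_left (h : IsLogarithmic ι κ E F M A B a b c f) (v w : Fin 2 → K) :
    differential f (ι v + κ w) (ι v) = a * eval (ι v + κ w) f := by
  simpa [Matrix.mulVec_add, h.euler_left_left, h.euler_left_right] using
    differential_mulVec_self h.linearField_euler_left (ι v + κ w)

lemma differential_right (h : IsLogarithmic ι κ E F M A B a b c f) (v w : Fin 2 → K) :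
    differential f (ι v + κ w) (κ w) = b * eval (ι v + κ w) f := by
  rw [add_comm, h.swap.differential_left]

lemma hessian_left (h : IsLogarithmic ι κ E F M A B a b c f) (v w : Fin 2 → K) (u : σ → K) :
    hessian f (ι v + κ w) (ι v) u =
      a * differential f (ι v + κ w) u - differential f (ι v + κ w) (E *ᵥ u) := by
  simpa [Matrix.mulVec_add, h.euler_left_left, h.euler_left_right] using
    hessian_mulVec_self h.linearField_euler_left (ι v + κ w) u

lemma hessian_right (h : IsLogarithmic ι κ E F M A B a b c f) (v w : Fin 2 → K) (u : σ → K) :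
    hessian f (ι v + κ w) (κ w) u =
      b * differential f (ι v + κ w) u - differential f (ι v + κ w) (F *ᵥ u) := by
  rw [add_comm, h.swap.hessian_left]

lemma differential_ne_zero_of_eval_eq_zero (h : IsLogarithmic ι κ E F M A B a b c f)
    (hA : IsTriangularBasis A v v' l l' r) (hB : IsTriangularBasis B w w' m m' s)
    (hf : eval (ι v + κ w) f = 0) :
    differential f (ι v + κ w) (ι v') ≠ 0 ∨ differential f (ι v + κ w) (κ w') ≠ 0 := by
  refine (h.smooth v w hA.fst_ne_zero hB.fst_ne_zero).imp (mt fun hv' => ?_) (mt fun hw' => ?_)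
  · exact hA.ext_linearMap (by simp [h.differential_left, hf]) hv'
  · exact hB.ext_linearMap (by simp [h.differential_right, hf]) hw'

lemma eval_corner (h : IsLogarithmic ι κ E F M A B a b c f)
    (hA : IsTriangularBasis A v v' l l' r) (hB : IsTriangularBasis B w w' m m' s) :
    (c - l * a - m * b) * eval (ι v + κ w) f = 0 :=
  eval_eq_zero_of_mulVec_eq_zero (h.linearField_shift l m) (h.shift_mulVec_add_eq_zero hA hB)

lemma differential_corner_left (h : IsLogarithmic ι κ E F M A B a b c f)
    (hA : IsTriangularBasis A v v' l l' r) (hB : IsTriangularBasis B w w' m m' s) :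
    (c - l * a - m * b) * differential f (ι v + κ w) (ι v') =
      (l' - l) * differential f (ι v + κ w) (ι v') + r * (a * eval (ι v + κ w) f) := by
  rw [mul_differential_of_mulVec_eq_zero (h.linearField_shift l m)
    (h.shift_mulVec_add_eq_zero hA hB), h.shift_mulVec_left_snd hA, map_add, map_smul, map_smul,
    h.differential_left, smul_eq_mul, smul_eq_mul]

lemma differential_corner_right (h : IsLogarithmic ι κ E F M A B a b c f)
    (hA : IsTriangularBasis A v v' l l' r) (hB : IsTriangularBasis B w w' m m' s) :
    (c - l * a - m * b) * differential f (ι v + κ w) (κ w') =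
      (m' - m) * differential f (ι v + κ w) (κ w') + s * (b * eval (ι v + κ w) f) := by
  rw [add_comm (ι v), ← h.swap.differential_corner_left hB hA, sub_right_comm]

lemma hessian_corner (h : IsLogarithmic ι κ E F M A B a b c f)
    (hA : IsTriangularBasis A v v' l l' r) (hB : IsTriangularBasis B w w' m m' s) (u u' : σ → K) :
    (c - l * a - m * b) * hessian f (ι v + κ w) u u' =
      hessian f (ι v + κ w) ((M - l • E - m • F) *ᵥ u) u' +
        hessian f (ι v + κ w) u ((M - l • E - m • F) *ᵥ u') :=
  mul_hessian_of_mulVec_eq_zero (h.linearField_shift l m) (h.shift_mulVec_add_eq_zero hA hB) u u'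

lemma exists_weight_of_corner (h : IsLogarithmic ι κ E F M A B a b c f)
    (hA : IsTriangularBasis A v v' l l' 0) (hB : IsTriangularBasis B w w' m m' 0) :
    ∃ i j : ℕ, i + j ≤ 1 ∧ c = l * a + m * b - (l - l') * i - (m - m') * j := by
  obtain hγ | hf := mul_eq_zero.mp (h.eval_corner hA hB)
  · exact ⟨0, 0, zero_le_one, by linear_combination hγ⟩
  have hv' := h.differential_corner_left hA hB
  have hw' := h.differential_corner_right hA hB
  rw [zero_mul, add_zero] at hv' hw'
  obtain hDv' | hDw' := h.differential_ne_zero_of_eval_eq_zero hA hB hf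
  · exact ⟨1, 0, le_rfl, by linear_combination mul_right_cancel₀ hDv' hv'⟩
  · exact ⟨0, 1, le_rfl, by linear_combination mul_right_cancel₀ hDw' hw'⟩

lemma exists_weight_relation (h : IsLogarithmic ι κ E F M A B a b c f) (ha : 2 ≤ a) (hb : 2 ≤ b)
    (hA : IsTriangularBasis A v v' l l' 0) (hB : IsTriangularBasis B w w' m m' 0) :
    ∃ p q : ℕ, p + q ≠ 0 ∧ (l - l') * p + (m - m') * q = 0 := by
  obtain ⟨i, j, hij, hc⟩ := h.exists_weight_of_corner hA hB
  obtain ⟨i', j', hij', hc'⟩ := h.exists_weight_of_corner hA.reverse hB.reverse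
  refine ⟨a - (i + i'), b - (j + j'), by lia, ?_⟩
  rw [Nat.cast_sub (by lia), Nat.cast_sub (by lia)]
  push_cast
  linear_combination hc' - hc

variable [CharZero K]

lemma false_of_diagonal (h : IsLogarithmic ι κ E F M A B a b c f) (ha : 2 ≤ a) (hb : 2 ≤ b)
    (hA : IsTriangularBasis A v v' l l' 0) (hB : IsTriangularBasis B w w' m m' 0)
    (hl : l ≠ l') (hm : m ≠ m') : False := by
  obtain ⟨p, q, hpq, hrel⟩ := h.exists_weight_relation ha hb hA hB
  obtain ⟨p', q', hpq', hrel'⟩ := h.exists_weight_relation ha hb hA hB.reverse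
  rw [← sub_ne_zero] at hl hm
  have hcross : p * q' + p' * q = 0 := by
    have hmul : (l - l') * ((p * q' + p' * q : ℕ) : K) = 0 := by
      push_cast
      linear_combination q' * hrel + q * hrel'
    exact_mod_cast (mul_eq_zero.mp hmul).resolve_left hl
  have hp : p ≠ 0 := by
    rintro rfl
    simp_all
  have hp' : p' ≠ 0 := by
    rintro rfl
    simp_all [sub_eq_zero]
  have hq' : q' ≠ 0 := by
    rintro rfl
    simp_all
  simp_all

lemma eval_eq_zero_of_jordan (h : IsLogarithmic ι κ E F M A B a b c f) (ha : a ≠ 0)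
    (hA : IsTriangularBasis A v v' l l r) (hr : r ≠ 0) (hB : IsTriangularBasis B w w' m m' s) :
    eval (ι v + κ w) f = 0 := by
  obtain hγ | hf := mul_eq_zero.mp (h.eval_corner hA hB)
  · simpa [hγ, hr, ha] using h.differential_corner_left hA hB
  · exact hf

lemma differential_eq_zero_of_jordan (h : IsLogarithmic ι κ E F M A B a b c f) (ha : 2 ≤ a)
    (hA : IsTriangularBasis A v v' l l r) (hr : r ≠ 0) (hB : IsTriangularBasis B w w' m m' s) :
    differential f (ι v + κ w) (ι v') = 0 := by
  set D := differential f (ι v + κ w)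
  set H := hessian f (ι v + κ w)
  have hD : (c - l * a - m * b) * D (ι v') = 0 := by
    simpa [h.eval_eq_zero_of_jordan (by lia) hA hr hB] using h.differential_corner_left hA hB
  have hH : (c - l * a - m * b) * H (ι v') (ι v') = 2 * r * (a - 1) * D (ι v') := by
    rw [h.hessian_corner hA hB, h.shift_mulVec_left_snd hA, hessian_comm f _ (ι v'), sub_self,
      zero_smul, zero_add, map_smul, LinearMap.smul_apply, h.hessian_left, h.euler_left_left,
      smul_eq_mul]
    ring
  have hsq : 2 * r * (a - 1) * D (ι v') ^ 2 = 0 := by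
    linear_combination H (ι v') (ι v') * hD - D (ι v') * hH
  have ha1 : (a : K) - 1 ≠ 0 := sub_ne_zero.mpr (by exact_mod_cast (by lia : a ≠ 1))
  simpa [hr, ha1] using hsq

lemma false_of_jordan (h : IsLogarithmic ι κ E F M A B a b c f) (ha : 2 ≤ a)
    (hA : IsTriangularBasis A v v' l l r) (hr : r ≠ 0) (hB : IsTriangularBasis B w w' m m' s) :
    False := by
  set D := differential f (ι v + κ w)
  set H := hessian f (ι v + κ w)
  have hf : eval (ι v + κ w) f = 0 := h.eval_eq_zero_of_jordan (by lia) hA hr hB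
  have hDv' : D (ι v') = 0 := h.differential_eq_zero_of_jordan ha hA hr hB
  have hDw' : D (κ w') ≠ 0 :=
    (h.differential_ne_zero_of_eval_eq_zero hA hB hf).resolve_left (not_not_intro hDv')
  have hγ : c - l * a - m * b = m' - m :=
    mul_right_cancel₀ hDw' (by simpa [hf] using h.differential_corner_right hA hB)
  have hHvw' : H (ι v) (κ w') = a * D (κ w') := by
    rw [h.hessian_left, h.euler_left_right, map_zero, sub_zero]
  have hHv'w : H (ι v') (κ w) = 0 := by
    rw [hessian_comm, h.hessian_right, h.euler_right_left, map_zero, sub_zero]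
    exact mul_eq_zero_of_right _ hDv'
  have hHv'w' : (c - l * a - m * b) * H (ι v') (κ w') = r * H (ι v) (κ w') +
      ((m' - m) * H (ι v') (κ w') + s * H (ι v') (κ w)) := by
    rw [h.hessian_corner hA hB, h.shift_mulVec_left_snd hA, h.shift_mulVec_right_snd hB]
    simp [H]
  have hzero : r * (a * D (κ w')) = 0 := by
    linear_combination H (ι v') (κ w') * hγ - hHv'w' - r * hHvw' - s * hHv'w
  simp [hr, hDw', (by lia : a ≠ 0)] at hzero

variable [IsAlgClosed K]

lemma exists_differential_eq_zero (h : IsLogarithmic ι κ E F M A B a b c f) (hb : b ≠ 0)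
    (v v' : Fin 2 → K) : ∃ w, w ≠ 0 ∧ differential f (ι v + κ w) (ι v') = 0 := by
  have hsemi := linearField_dirDeriv_of_mulVec_eq_zero h.linearField_euler_right
    (h.euler_right_left v')
  have hM : F *ᵥ (ι v + κ ![1, 0] + κ ![0, 1]) = κ ![1, 0] + κ ![0, 1] := by
    simp [Matrix.mulVec_add, h.euler_right_left, h.euler_right_right]
  obtain ⟨t, ht⟩ | ⟨t, ht⟩ :=
    exists_eval_eq_zero_of_mulVec_add (Nat.cast_ne_zero.mpr hb) hsemi hM
  · refine ⟨![1, 0] + t • ![0, 1], by simp, ?_⟩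
    rwa [map_add, map_smul, ← add_assoc]
  · refine ⟨![0, 1] + t • ![1, 0], by simp, ?_⟩
    rwa [map_add, map_smul, ← add_assoc]

lemma eq_weight_of_right_eq_smul_one (h : IsLogarithmic ι κ E F M A B a b c f) (hb : b ≠ 0)
    (hA : IsTriangularBasis A v v' l l' 0) (hB : B = m • 1) : c - l * a - m * b = 0 := by
  by_contra hγ
  obtain ⟨w, hw, hDv'⟩ := h.exists_differential_eq_zero hb v v'
  obtain ⟨w', hB'⟩ := exists_isTriangularBasis_smul_one m hw
  rw [← hB] at hB'
  have hf := (mul_eq_zero.mp (h.eval_corner hA hB')).resolve_left hγ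
  have hDw' : differential f (ι v + κ w) (κ w') = 0 := by
    simpa [hγ] using h.differential_corner_right hA hB'
  exact (h.differential_ne_zero_of_eval_eq_zero hA hB' hf).elim (· hDv') (· hDw')

lemma eq_of_right_eq_smul_one (h : IsLogarithmic ι κ E F M A B a b c f) (ha : a ≠ 0) (hb : b ≠ 0)
    (hA : IsTriangularBasis A v v' l l' 0) (hB : B = m • 1) : l = l' := by
  have hl := h.eq_weight_of_right_eq_smul_one hb hA hB
  have hl' := h.eq_weight_of_right_eq_smul_one hb hA.reverse hB
  exact mul_right_cancel₀ (Nat.cast_ne_zero.mpr ha : (a : K) ≠ 0) (by linear_combination hl' - hl)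

lemma exists_eq_smul_one (h : IsLogarithmic ι κ E F M A B a b c f) (ha : 2 ≤ a) (hb : 2 ≤ b) :
    ∃ s t : K, A = s • 1 ∧ B = t • 1 := by
  obtain ⟨v, v', l, l', r, hA, hlr⟩ := exists_isTriangularBasis_eq_or_eq_zero A
  obtain ⟨w, w', m, m', s, hB, hms⟩ := exists_isTriangularBasis_eq_or_eq_zero B
  obtain rfl : r = 0 := hlr.elim
    (fun hl => by_contra fun hr => h.false_of_jordan ha (hl ▸ hA) hr hB) id
  obtain rfl : s = 0 := hms.elim
    (fun hm => by_contra fun hs => h.swap.false_of_jordan hb (hm ▸ hB) hs hA) id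
  obtain rfl | hl := eq_or_ne l l'
  · obtain rfl := h.swap.eq_of_right_eq_smul_one (by lia) (by lia) hB hA.eq_smul_one
    exact ⟨l, m, hA.eq_smul_one, hB.eq_smul_one⟩
  · obtain rfl | hm := eq_or_ne m m'
    · exact (hl (h.eq_of_right_eq_smul_one (by lia) (by lia) hA hB.eq_smul_one)).elim
    · exact (h.false_of_diagonal ha hb hA hB hl hm).elim

end IsLogarithmic

end LogarithmicFields

section Coordinates

open scoped Matrix

/-- The inclusion of the coordinate plane of `x₀, x₁`. -/
def xEmb : (Fin 2 → K) →ₗ[K] Fin 4 → K where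
  toFun v := ![v 0, v 1, 0, 0]
  map_add' v w := by simp
  map_smul' c v := by simp

/-- The inclusion of the coordinate plane of `y₀, y₁`. -/
def yEmb : (Fin 2 → K) →ₗ[K] Fin 4 → K where
  toFun w := ![0, 0, w 0, w 1]
  map_add' v w := by simp
  map_smul' c v := by simp

lemma xEmb_apply (v : Fin 2 → K) : xEmb v = ![v 0, v 1, 0, 0] :=
  rfl

lemma yEmb_apply (w : Fin 2 → K) : yEmb w = ![0, 0, w 0, w 1] :=
  rfl

lemma xEmb_add_yEmb (v w : Fin 2 → K) : xEmb v + yEmb w = ![v 0, v 1, w 0, w 1] := by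
  simp [xEmb_apply, yEmb_apply]

lemma exists_xEmb_add_yEmb_eq (P : Fin 4 → K) : ∃ v w : Fin 2 → K, xEmb v + yEmb w = P := by
  refine ⟨![P 0, P 1], ![P 2, P 3], ?_⟩
  rw [xEmb_add_yEmb]
  ext i
  fin_cases i <;> rfl

/-- The matrix acting as `A` on `x₀, x₁` and as `B` on `y₀, y₁`. -/
def blockMatrix (A B : Matrix (Fin 2) (Fin 2) K) : Matrix (Fin 4) (Fin 4) K :=
  !![A 0 0, A 0 1, 0, 0; A 1 0, A 1 1, 0, 0; 0, 0, B 0 0, B 0 1; 0, 0, B 1 0, B 1 1]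

lemma blockMatrix_mulVec_xEmb (A B : Matrix (Fin 2) (Fin 2) K) (v : Fin 2 → K) :
    blockMatrix A B *ᵥ xEmb v = xEmb (A *ᵥ v) := by
  ext i
  fin_cases i <;> simp [blockMatrix, xEmb_apply, Matrix.mulVec, dotProduct, Fin.sum_univ_four]

lemma blockMatrix_mulVec_yEmb (A B : Matrix (Fin 2) (Fin 2) K) (w : Fin 2 → K) :
    blockMatrix A B *ᵥ yEmb w = yEmb (B *ᵥ w) := by
  ext i
  fin_cases i <;> simp [blockMatrix, yEmb_apply, Matrix.mulVec, dotProduct, Fin.sum_univ_four]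

lemma linearField_blockMatrix (A B : Matrix (Fin 2) (Fin 2) K) (f : MvPolynomial (Fin 4) K) :
    linearField (blockMatrix A B) f =
      (A 0 0 • X 0 + A 0 1 • X 1) * pderiv 0 f + (A 1 0 • X 0 + A 1 1 • X 1) * pderiv 1 f +
        (B 0 0 • X 2 + B 0 1 • X 3) * pderiv 2 f + (B 1 0 • X 2 + B 1 1 • X 3) * pderiv 3 f := by
  simp only [linearField_apply, dirDeriv_apply, Fin.sum_univ_four, blockMatrix, Matrix.col_apply,
    Matrix.of_apply, Matrix.cons_val, smul_eq_C_mul, map_zero]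
  ring

variable {a b : ℕ} {f : MvPolynomial (Fin 4) K}

lemma IsBihomogeneous.isWeightedHomogeneous_left (hf : IsBihomogeneous a b f) :
    IsWeightedHomogeneous ![1, 1, 0, 0] f a := fun m hm => by
  simpa [Finsupp.weight_apply, Finsupp.sum_fintype, Fin.sum_univ_four] using
    (hf m (mem_support_iff.mpr hm)).1

lemma IsBihomogeneous.isWeightedHomogeneous_right (hf : IsBihomogeneous a b f) :
    IsWeightedHomogeneous ![0, 0, 1, 1] f b := fun m hm => by
  simpa [Finsupp.weight_apply, Finsupp.sum_fintype, Fin.sum_univ_four] using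
    (hf m (mem_support_iff.mpr hm)).2

lemma IsBihomogeneous.linearField_left (hf : IsBihomogeneous a b f) :
    linearField (blockMatrix 1 0) f = (a : K) • f := by
  rw [← linearField_diagonal_of_isWeightedHomogeneous hf.isWeightedHomogeneous_left]
  congr
  ext i j
  fin_cases i <;> fin_cases j <;> simp [blockMatrix]

lemma IsBihomogeneous.linearField_right (hf : IsBihomogeneous a b f) :
    linearField (blockMatrix 0 1) f = (b : K) • f := by
  rw [← linearField_diagonal_of_isWeightedHomogeneous hf.isWeightedHomogeneous_right]
  congr
  ext i j
  fin_cases i <;> fin_cases j <;> simp [blockMatrix]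

lemma DefinesSmoothCurve.differential_comp_ne_zero (hf : DefinesSmoothCurve f) {v w : Fin 2 → K}
    (hv : v ≠ 0) (hw : w ≠ 0) :
    differential f (xEmb v + yEmb w) ∘ₗ xEmb ≠ 0 ∨
      differential f (xEmb v + yEmb w) ∘ₗ yEmb ≠ 0 := by
  have hadm : Admissible (xEmb v + yEmb w) := by
    rw [xEmb_add_yEmb]
    simpa [Admissible, funext_iff, Fin.forall_fin_two] using And.intro hv hw
  obtain ⟨i, hi⟩ := hf _ hadm
  by_contra! hzero
  have hsingle : differential f (xEmb v + yEmb w) (Pi.single i 1) = 0 := by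
    obtain ⟨u, z, huz⟩ := exists_xEmb_add_yEmb_eq (Pi.single i (1 : K))
    rw [← huz, map_add, ← LinearMap.comp_apply, ← LinearMap.comp_apply, hzero.1, hzero.2,
      LinearMap.zero_apply, LinearMap.zero_apply, add_zero]
  rw [differential_apply, dirDeriv_single, one_smul] at hsingle
  exact hi hsingle

lemma isLogarithmic_blockMatrix {A B : Matrix (Fin 2) (Fin 2) K} {c : K}
    (hfbi : IsBihomogeneous a b f) (hfsm : DefinesSmoothCurve f)
    (hlog : linearField (blockMatrix A B) f = c • f) :
    IsLogarithmic xEmb yEmb (blockMatrix 1 0) (blockMatrix 0 1) (blockMatrix A B) A B a b c f where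
  euler_left_left v := by rw [blockMatrix_mulVec_xEmb, Matrix.one_mulVec]
  euler_left_right w := by rw [blockMatrix_mulVec_yEmb, Matrix.zero_mulVec, map_zero]
  euler_right_left v := by rw [blockMatrix_mulVec_xEmb, Matrix.zero_mulVec, map_zero]
  euler_right_right w := by rw [blockMatrix_mulVec_yEmb, Matrix.one_mulVec]
  mulVec_left := blockMatrix_mulVec_xEmb A B
  mulVec_right := blockMatrix_mulVec_yEmb A B
  linearField_euler_left := hfbi.linearField_left
  linearField_euler_right := hfbi.linearField_right
  linearField_eq := hlog
  smooth _ _ := hfsm.differential_comp_ne_zero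

end Coordinates

/-- (`h⁰(TQ(−log C)) = 0` for a smooth curve of bidegree `(a,b)`,
`a, b ≥ 2`.)  If `f` is bihomogeneous of bidegree `(a,b)` with `a, b ≥ 2` defining
a smooth curve, and `p₀, p₁` are linear forms in `x₀, x₁`, `q₀, q₁` are linear
forms in `y₀, y₁`, and `c ∈ K` with
`p₀·∂f/∂x₀ + p₁·∂f/∂x₁ + q₀·∂f/∂y₀ + q₁·∂f/∂y₁ = c·f`, then the derivation is
a linear combination of the two Euler derivations: `p₀ = s·x₀`, `p₁ = s·x₁`,
`q₀ = t·y₀`, `q₁ = t·y₁` for some `s, t ∈ K`. -/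
theorem no_logarithmic_vector_fields
    {K : Type*} [Field K] [IsAlgClosed K] [CharZero K]
    (a b : ℕ) (ha : 2 ≤ a) (hb : 2 ≤ b)
    (f : MvPolynomial (Fin 4) K)
    (hfbi : IsBihomogeneous a b f) (hfsm : DefinesSmoothCurve f)
    (p₀ p₁ q₀ q₁ : MvPolynomial (Fin 4) K)
    (hp₀ : p₀ ∈ Submodule.span K ({X 0, X 1} : Set (MvPolynomial (Fin 4) K)))
    (hp₁ : p₁ ∈ Submodule.span K ({X 0, X 1} : Set (MvPolynomial (Fin 4) K)))
    (hq₀ : q₀ ∈ Submodule.span K ({X 2, X 3} : Set (MvPolynomial (Fin 4) K)))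
    (hq₁ : q₁ ∈ Submodule.span K ({X 2, X 3} : Set (MvPolynomial (Fin 4) K)))
    (c : K)
    (hlog : p₀ * pderiv 0 f + p₁ * pderiv 1 f + q₀ * pderiv 2 f + q₁ * pderiv 3 f
        = C c * f) :
    ∃ s t : K, p₀ = C s * X 0 ∧ p₁ = C s * X 1 ∧ q₀ = C t * X 2 ∧ q₁ = C t * X 3 := by
  obtain ⟨a₀₀, a₀₁, rfl⟩ := Submodule.mem_span_pair.mp hp₀
  obtain ⟨a₁₀, a₁₁, rfl⟩ := Submodule.mem_span_pair.mp hp₁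
  obtain ⟨b₀₀, b₀₁, rfl⟩ := Submodule.mem_span_pair.mp hq₀
  obtain ⟨b₁₀, b₁₁, rfl⟩ := Submodule.mem_span_pair.mp hq₁
  have hfield : linearField (blockMatrix !![a₀₀, a₀₁; a₁₀, a₁₁] !![b₀₀, b₀₁; b₁₀, b₁₁]) f = c • f :=
    (linearField_blockMatrix _ _ f).trans (hlog.trans (smul_eq_C_mul f c).symm)
  obtain ⟨s, t, hA, hB⟩ :=
    (isLogarithmic_blockMatrix hfbi hfsm hfield).exists_eq_smul_one ha hb
  refine ⟨s, t, ?_⟩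
  simp_all [← Matrix.ext_iff, Fin.forall_fin_two, smul_eq_C_mul]
end
end
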